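/- Let A be an associative unital algebra over ℂ with a full comultiplication Δ, and assume there exist a faithful left integral φ and a faithful right integral on A. Then there exists a unique linear map S : A → A such that S((id ⊗ φ)(Δ(a)(1 ⊗ b))) = (id ⊗ φ)((1 ⊗ a)Δ(b)) for all a, b ∈ A (this determines S on all of A since A is spanned by elements of the form (id ⊗ φ)(Δ(a)(1 ⊗ b))), and this S satisfies S(ab) = S(b)S(a) for all a, b ∈ A. -/

import Mathlib

open TensorProduct

noncomputable section

variable {A : Type*} [Ring A] [Algebra ℂ A]

/-- The slice map `id ⊗ ω : A ⊗ A → A`. -/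
def sliceR (ω : A →ₗ[ℂ] ℂ) : A ⊗[ℂ] A →ₗ[ℂ] A :=
  (TensorProduct.rid ℂ A).toLinearMap ∘ₗ TensorProduct.map LinearMap.id ω

/-- The slice map `ω ⊗ id : A ⊗ A → A`. -/
def sliceL (ω : A →ₗ[ℂ] ℂ) : A ⊗[ℂ] A →ₗ[ℂ] A :=
  (TensorProduct.lid ℂ A).toLinearMap ∘ₗ TensorProduct.map ω LinearMap.id

/-- Coassociativity of a comultiplication `Δ : A → A ⊗ A`:
`(Δ ⊗ id) ∘ Δ = (id ⊗ Δ) ∘ Δ` (up to the associator). -/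
def IsCoassoc (Δ : A →ₐ[ℂ] A ⊗[ℂ] A) : Prop :=
  ∀ a : A,
    TensorProduct.assoc ℂ A A A (TensorProduct.map Δ.toLinearMap LinearMap.id (Δ a)) =
      TensorProduct.map LinearMap.id Δ.toLinearMap (Δ a)

/-- A left integral: a nonzero functional with `(id ⊗ φ)(Δ a) = φ(a)·1` for all `a`. -/
def IsLeftIntegral (Δ : A →ₐ[ℂ] A ⊗[ℂ] A) (φ : A →ₗ[ℂ] ℂ) : Prop :=
  φ ≠ 0 ∧ ∀ a : A, sliceR φ (Δ a) = φ a • (1 : A)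

/-- A right integral: a nonzero functional with `(ψ ⊗ id)(Δ a) = ψ(a)·1` for all `a`. -/
def IsRightIntegral (Δ : A →ₐ[ℂ] A ⊗[ℂ] A) (ψ : A →ₗ[ℂ] ℂ) : Prop :=
  ψ ≠ 0 ∧ ∀ a : A, sliceL ψ (Δ a) = ψ a • (1 : A)

/-- A faithful functional: the bilinear form `(a, b) ↦ ω(ab)` is non-degenerate. -/
def IsFaithful (ω : A →ₗ[ℂ] ℂ) : Prop :=
  (∀ b : A, (∀ a : A, ω (a * b) = 0) → b = 0) ∧
  (∀ b : A, (∀ a : A, ω (b * a) = 0) → b = 0)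

/-- The left leg of an element `x ∈ A ⊗ A`: the span of `{(id ⊗ ω)(x) : ω ∈ A*}`. -/
def leftLegOf (x : A ⊗[ℂ] A) : Submodule ℂ A :=
  Submodule.span ℂ {y : A | ∃ ω : A →ₗ[ℂ] ℂ, y = sliceR ω x}

/-- The right leg of an element `x ∈ A ⊗ A`: the span of `{(ω ⊗ id)(x) : ω ∈ A*}`. -/
def rightLegOf (x : A ⊗[ℂ] A) : Submodule ℂ A :=
  Submodule.span ℂ {y : A | ∃ ω : A →ₗ[ℂ] ℂ, y = sliceL ω x}

/-- The left leg of `Δ`: the span of `{(id ⊗ ω)(Δ a) : a ∈ A, ω ∈ A*}`. -/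
def leftLeg (Δ : A →ₐ[ℂ] A ⊗[ℂ] A) : Submodule ℂ A :=
  Submodule.span ℂ {y : A | ∃ (a : A) (ω : A →ₗ[ℂ] ℂ), y = sliceR ω (Δ a)}

/-- The right leg of `Δ`: the span of `{(ω ⊗ id)(Δ a) : a ∈ A, ω ∈ A*}`. -/
def rightLeg (Δ : A →ₐ[ℂ] A ⊗[ℂ] A) : Submodule ℂ A :=
  Submodule.span ℂ {y : A | ∃ (a : A) (ω : A →ₗ[ℂ] ℂ), y = sliceL ω (Δ a)}

/-- A comultiplication is full if both of its legs are all of `A`. -/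
def IsFull (Δ : A →ₐ[ℂ] A ⊗[ℂ] A) : Prop :=
  leftLeg Δ = ⊤ ∧ rightLeg Δ = ⊤

/-- The linear map `T₁` with `T₁ (a ⊗ b) = Δ(a) * (1 ⊗ b)`. -/
def T1 (Δ : A →ₐ[ℂ] A ⊗[ℂ] A) : A ⊗[ℂ] A →ₗ[ℂ] A ⊗[ℂ] A :=
  LinearMap.mul' ℂ (A ⊗[ℂ] A) ∘ₗ
    TensorProduct.map Δ.toLinearMap (TensorProduct.mk ℂ A A 1)

/-- The linear map `T₁'` with `T₁' (a ⊗ b) = Δ(a) * (b ⊗ 1)`. -/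
def T1' (Δ : A →ₐ[ℂ] A ⊗[ℂ] A) : A ⊗[ℂ] A →ₗ[ℂ] A ⊗[ℂ] A :=
  LinearMap.mul' ℂ (A ⊗[ℂ] A) ∘ₗ
    TensorProduct.map Δ.toLinearMap ((TensorProduct.mk ℂ A A).flip 1)

/-- The linear map `T₂` with `T₂ (a ⊗ b) = (a ⊗ 1) * Δ(b)`. -/
def T2 (Δ : A →ₐ[ℂ] A ⊗[ℂ] A) : A ⊗[ℂ] A →ₗ[ℂ] A ⊗[ℂ] A :=
  LinearMap.mul' ℂ (A ⊗[ℂ] A) ∘ₗ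
    TensorProduct.map ((TensorProduct.mk ℂ A A).flip 1) Δ.toLinearMap

/-- The linear map `T₂'` with `T₂' (a ⊗ b) = (1 ⊗ a) * Δ(b)`. -/
def T2' (Δ : A →ₐ[ℂ] A ⊗[ℂ] A) : A ⊗[ℂ] A →ₗ[ℂ] A ⊗[ℂ] A :=
  LinearMap.mul' ℂ (A ⊗[ℂ] A) ∘ₗ
    TensorProduct.map (TensorProduct.mk ℂ A A 1) Δ.toLinearMap

/-- A left cointegral: a nonzero element `h` with `Δ(a)(1 ⊗ h) = a ⊗ h` for all `a`. -/
def IsLeftCointegral (Δ : A →ₐ[ℂ] A ⊗[ℂ] A) (h : A) : Prop :=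
  h ≠ 0 ∧ ∀ a : A, Δ a * ((1 : A) ⊗ₜ[ℂ] h) = a ⊗ₜ[ℂ] h

/-- A right cointegral: a nonzero element `k` with `(k ⊗ 1)Δ(a) = k ⊗ a` for all `a`. -/
def IsRightCointegral (Δ : A →ₐ[ℂ] A ⊗[ℂ] A) (k : A) : Prop :=
  k ≠ 0 ∧ ∀ a : A, (k ⊗ₜ[ℂ] (1 : A)) * Δ a = k ⊗ₜ[ℂ] a

/-- `Δ₁₃(a) = (1 ⊗ σ)(Δ(a) ⊗ 1)`, viewed in `A ⊗ (A ⊗ A)`. -/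
def delta13 (Δ : A →ₐ[ℂ] A ⊗[ℂ] A) (a : A) : A ⊗[ℂ] (A ⊗[ℂ] A) :=
  TensorProduct.map LinearMap.id (TensorProduct.comm ℂ A A).toLinearMap
    (TensorProduct.assoc ℂ A A A (Δ a ⊗ₜ[ℂ] (1 : A)))

/-!
Let `T(a ⊗ b) = Δ(a)(1 ⊗ b)`. If `c = (id ⊗ φ)(Δ(p)(1 ⊗ q))`, then coassociativity and left
invariance give `c ⊗ 1 = T(w)` with `w = ∑ φ(p₍₂₎q₍₂₎) p₍₁₎ ⊗ q₍₁₎`. Such `c` span `A`, so `T` is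
surjective; it is injective because `(ψ ⊗ id)(Δ(c) T(z)) = (ψ(c ·) ⊗ id)(z)`.

Regard `T⁻¹(c ⊗ 1) = ∑ xᵢ ⊗ yᵢ` as an element of `A ⊗ Aᵒᵖ`. Since `c ⊗ 1` commutes with `1 ⊗ b`,
the map `c ↦ T⁻¹(c ⊗ 1)` is an algebra homomorphism. For `c` as above, `∑ xᵢyᵢ = φ(pq)1` is a
scalar `ε(c)1`, which makes `ε` a character with `(ε ⊗ id)Δ = id`. Then `S(c) = ∑ ε(xᵢ)yᵢ` is a
homomorphism into `Aᵒᵖ`, and evaluating it at `w` gives the defining formula.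
-/

section Slices

variable {R M N : Type*} [CommSemiring R] [AddCommMonoid M] [Module R M] [AddCommMonoid N]
  [Module R N]

/-- The slice map `id ⊗ ω : M ⊗ N → M` over an arbitrary base; `sliceR` is the case `M = N` over
`ℂ`. -/
def rightSlice (ω : Module.Dual R N) : M ⊗[R] N →ₗ[R] M :=
  (TensorProduct.rid R M).toLinearMap ∘ₗ ω.lTensor M

/-- The slice map `ω ⊗ id : M ⊗ N → N` over an arbitrary base; `sliceL` is the case `M = N` over
`ℂ`. -/
def leftSlice (ω : Module.Dual R M) : M ⊗[R] N →ₗ[R] N :=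
  (TensorProduct.lid R N).toLinearMap ∘ₗ ω.rTensor N

@[simp]
theorem rightSlice_tmul (ω : Module.Dual R N) (x : M) (y : N) :
    rightSlice ω (x ⊗ₜ[R] y) = ω y • x := by
  simp [rightSlice]

@[simp]
theorem leftSlice_tmul (ω : Module.Dual R M) (x : M) (y : N) :
    leftSlice ω (x ⊗ₜ[R] y) = ω x • y := by
  simp [leftSlice]

theorem apply_rightSlice (f : Module.Dual R M) (g : Module.Dual R N) (z : M ⊗[R] N) :
    f (rightSlice g z) = g (leftSlice f z) := by
  induction z with
  | zero => simp
  | tmul x y => simp [mul_comm]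
  | add u v hu hv => simp [hu, hv]

theorem eq_zero_of_forall_rightSlice_eq_zero [Module.Free R N] {z : M ⊗[R] N}
    (h : ∀ ω : Module.Dual R N, rightSlice ω z = 0) : z = 0 := by
  classical
  let b := Module.Free.chooseBasis R N
  refine (TensorProduct.equivFinsuppOfBasisRight (M := M) b).map_eq_zero_iff.mp
    (Finsupp.ext fun i ↦ ?_)
  rw [TensorProduct.equivFinsuppOfBasisRight_apply]
  exact h (b.coord i)

theorem leftSlice_mul_one_tmul {A B : Type*} [Semiring A] [Algebra R A] [Semiring B] [Algebra R B]
    (ω : Module.Dual R A) (z : A ⊗[R] B) (b : B) :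
    leftSlice ω (z * (1 ⊗ₜ[R] b)) = leftSlice ω z * b := by
  induction z with
  | zero => simp
  | tmul x y => simp
  | add u v hu hv => simp [add_mul, hu, hv]

theorem span_rightSlice_mul_one_tmul_eq_top {k A B ι : Type*} [Field k] [Ring A] [Algebra k A]
    [Ring B] [Algebra k B] {x : ι → A ⊗[k] B} {φ : Module.Dual k B}
    (hφ : ((LinearMap.mul k B).compr₂ φ).SeparatingLeft)
    (hx : Submodule.span k {a | ∃ i, ∃ ω : Module.Dual k B, a = rightSlice ω (x i)} = ⊤) :
    Submodule.span k {a | ∃ i b, a = rightSlice φ (x i * (1 ⊗ₜ[k] b))} = ⊤ := by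
  by_contra hne
  obtain ⟨f, hf, hker⟩ := Submodule.exists_le_ker_of_lt_top _ (lt_top_iff_ne_top.mpr hne)
  have leftSlice_eq_zero (i : ι) : leftSlice f (x i) = 0 := by
    refine hφ _ fun b ↦ ?_
    have : f (rightSlice φ (x i * (1 ⊗ₜ[k] b))) = 0 := hker (Submodule.subset_span ⟨i, b, rfl⟩)
    rwa [apply_rightSlice, leftSlice_mul_one_tmul] at this
  refine hf (LinearMap.ker_eq_top.mp (top_le_iff.mp (hx ▸ Submodule.span_le.mpr ?_)))
  rintro _ ⟨i, ω, rfl⟩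
  simp [apply_rightSlice, leftSlice_eq_zero]

end Slices

section GaloisMap

variable {R H : Type*} [CommSemiring R] [Semiring H] [Algebra R H]

/-- The action of the enveloping algebra `H ⊗ Hᵐᵒᵖ` on `H ⊗ H` given by
`(a ⊗ b) • z = Δ(a) z (1 ⊗ b)`. -/
def galoisAction (Δ : H →ₐ[R] H ⊗[R] H) : H ⊗[R] Hᵐᵒᵖ →ₐ[R] Module.End R (H ⊗[R] H) :=
  (AlgHom.mulLeftRight R (H ⊗[R] H)).comp
    (Algebra.TensorProduct.map Δ (AlgHom.op Algebra.TensorProduct.includeRight))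

/-- The Galois map `a ⊗ b ↦ Δ(a)(1 ⊗ b)`. This is `T1`, except that the second factor of the source
carries the opposite multiplication: the inverse image of `H ⊗ 1` is then a subalgebra. -/
def galoisMap (Δ : H →ₐ[R] H ⊗[R] H) : H ⊗[R] Hᵐᵒᵖ →ₗ[R] H ⊗[R] H :=
  (galoisAction Δ).toLinearMap.flip 1

variable (Δ : H →ₐ[R] H ⊗[R] H)

@[simp]
theorem galoisAction_tmul (a : H) (b : Hᵐᵒᵖ) (z : H ⊗[R] H) :
    galoisAction Δ (a ⊗ₜ b) z = Δ a * z * (1 ⊗ₜ b.unop) := by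
  simp [galoisAction]

@[simp]
theorem galoisMap_tmul (a : H) (b : Hᵐᵒᵖ) :
    galoisMap Δ (a ⊗ₜ b) = Δ a * (1 ⊗ₜ b.unop) := by
  simp [galoisMap]

theorem galoisMap_mul (w w' : H ⊗[R] Hᵐᵒᵖ) :
    galoisMap Δ (w * w') = galoisAction Δ w (galoisMap Δ w') := by
  simp [galoisMap]

theorem galoisMap_tmul_one (a : H) : galoisMap Δ (a ⊗ₜ 1) = Δ a := by
  simp [← Algebra.TensorProduct.one_def]

theorem galoisMap_one_tmul_mul (b : Hᵐᵒᵖ) (w : H ⊗[R] Hᵐᵒᵖ) :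
    galoisMap Δ ((1 ⊗ₜ b) * w) = galoisMap Δ w * (1 ⊗ₜ b.unop) := by
  simp [galoisMap_mul]

theorem galoisAction_mul_tmul_one (w : H ⊗[R] Hᵐᵒᵖ) (z : H ⊗[R] H) (c : H) :
    galoisAction Δ w (z * (c ⊗ₜ 1)) = galoisAction Δ w z * (c ⊗ₜ 1) := by
  induction w with
  | zero => simp
  | tmul a b => simp [mul_assoc]
  | add u v hu hv => simp [add_mul, hu, hv]

theorem galoisMap_mul_of_eq_tmul_one {w w' : H ⊗[R] Hᵐᵒᵖ} {c : H}
    (hw' : galoisMap Δ w' = c ⊗ₜ 1) : galoisMap Δ (w * w') = galoisMap Δ w * (c ⊗ₜ 1) := by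
  rw [galoisMap_mul, hw', ← one_mul (c ⊗ₜ[R] (1 : H)), galoisAction_mul_tmul_one, one_mul,
    galoisMap, LinearMap.flip_apply, AlgHom.toLinearMap_apply]

end GaloisMap

section Translation

variable {R H : Type*} [CommSemiring R] [Semiring H] [Algebra R H] {Δ : H →ₐ[R] H ⊗[R] H}
  (hT : Function.Bijective (galoisMap Δ))

/-- The translation map `c ↦ T⁻¹(c ⊗ 1)` of a bijective Galois map `T`; in a Hopf algebra it is
`c ↦ c₍₁₎ ⊗ S(c₍₂₎)`. -/
def translation : H →ₐ[R] H ⊗[R] Hᵐᵒᵖ :=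
  let T := LinearEquiv.ofBijective (galoisMap Δ) hT
  have apply_symm (z : H ⊗[R] H) : galoisMap Δ (T.symm z) = z := T.apply_symm_apply z
  .ofLinearMap (T.symm.toLinearMap ∘ₗ (TensorProduct.mk R H H).flip 1)
    (hT.injective (by simp [apply_symm, Algebra.TensorProduct.one_def]))
    fun a b ↦ hT.injective (by
      simp [apply_symm, galoisMap_mul_of_eq_tmul_one Δ (apply_symm (b ⊗ₜ 1))])

theorem galoisMap_translation (c : H) : galoisMap Δ (translation hT c) = c ⊗ₜ 1 :=
  (LinearEquiv.ofBijective (galoisMap Δ) hT).apply_symm_apply _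

theorem translation_eq_of_galoisMap_eq {w : H ⊗[R] Hᵐᵒᵖ} {c : H}
    (hw : galoisMap Δ w = c ⊗ₜ 1) : translation hT c = w :=
  hT.injective ((galoisMap_translation hT c).trans hw.symm)

/-- The antipode `c ↦ (ε ⊗ id)(T⁻¹(c ⊗ 1))` attached to a bijective Galois map `T` and a character
`ε`, with values in `Hᵐᵒᵖ` so that it is an algebra homomorphism. -/
def antipodeHom (ε : H →ₐ[R] R) : H →ₐ[R] Hᵐᵒᵖ :=
  (Algebra.TensorProduct.lid R Hᵐᵒᵖ).toAlgHom.comp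
    ((Algebra.TensorProduct.map ε (AlgHom.id R Hᵐᵒᵖ)).comp (translation hT))

theorem antipodeHom_apply (ε : H →ₐ[R] R) (c : H) :
    antipodeHom hT ε c = leftSlice ε.toLinearMap (translation hT c) :=
  rfl

theorem galoisMap_one_tmul_mul_translation (c d : H) :
    galoisMap Δ ((1 ⊗ₜ MulOpposite.op d) * translation hT c) = c ⊗ₜ d := by
  simp [galoisMap_one_tmul_mul, galoisMap_translation]

theorem leftSlice_galoisMap {ε : Module.Dual R H}
    (hε : ∀ c, AlgHom.mulLeftRight R H (translation hT c) 1 = ε c • 1) (w : H ⊗[R] Hᵐᵒᵖ) :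
    leftSlice ε (galoisMap Δ w) = AlgHom.mulLeftRight R H w 1 := by
  let T := LinearEquiv.ofBijective (galoisMap Δ) hT
  suffices h : leftSlice ε = (AlgHom.mulLeftRight R H).toLinearMap.flip 1 ∘ₗ T.symm.toLinearMap by
    rw [h]
    exact congrArg (fun w ↦ AlgHom.mulLeftRight R H w 1) (T.symm_apply_apply w)
  ext c d
  have symm_tmul : T.symm (c ⊗ₜ d) = (1 ⊗ₜ MulOpposite.op d) * translation hT c :=
    T.symm_apply_eq.mpr (galoisMap_one_tmul_mul_translation hT c d).symm
  simp [symm_tmul, hε]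

theorem leftSlice_comul {ε : Module.Dual R H}
    (hε : ∀ c, AlgHom.mulLeftRight R H (translation hT c) 1 = ε c • 1) (a : H) :
    leftSlice ε (Δ a) = a := by
  rw [← galoisMap_tmul_one, leftSlice_galoisMap hT hε]
  simp

theorem exists_algHom_mulLeftRight_translation_eq_smul_one
    (hinj : Function.Injective (algebraMap R H))
    (h : ∀ c, AlgHom.mulLeftRight R H (translation hT c) 1 ∈ (⊥ : Subalgebra R H)) :
    ∃ ε : H →ₐ[R] R, ∀ c, AlgHom.mulLeftRight R H (translation hT c) 1 = ε c • 1 := by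
  let E : H →ₐ[R] H :=
    .ofLinearMap ((AlgHom.mulLeftRight R H).toLinearMap.flip 1 ∘ₗ (translation hT).toLinearMap)
      (by simp) fun a b ↦ by
        obtain ⟨r, hr⟩ := Algebra.mem_bot.mp (h b)
        simp [← hr, Algebra.algebraMap_eq_smul_one]
  let e := Algebra.botEquivOfInjective hinj
  refine ⟨e.toAlgHom.comp (E.codRestrict ⊥ h), fun c ↦ ?_⟩
  rw [← Algebra.algebraMap_eq_smul_one]
  exact congrArg Subtype.val (e.symm_apply_apply ⟨E c, h c⟩).symm

end Translation

section Integrals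

variable {R H : Type*} [CommSemiring R] [Semiring H] [Algebra R H]

/-- `IsCoassoc` over an arbitrary base: `(Δ ⊗ id)Δ = (id ⊗ Δ)Δ`. -/
def IsCoassociative (Δ : H →ₐ[R] H ⊗[R] H) : Prop :=
  ∀ a, TensorProduct.assoc R H H H (Δ.toLinearMap.rTensor H (Δ a)) = Δ.toLinearMap.lTensor H (Δ a)

/-- Left invariance `(id ⊗ φ)(Δ(a)) = φ(a)1`, the equation in `IsLeftIntegral`, over an arbitrary
base. -/
def IsLeftInvariant (Δ : H →ₐ[R] H ⊗[R] H) (φ : Module.Dual R H) : Prop :=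
  ∀ a, rightSlice φ (Δ a) = φ a • 1

/-- Right invariance `(ψ ⊗ id)(Δ(a)) = ψ(a)1`, the equation in `IsRightIntegral`, over an arbitrary
base. -/
def IsRightInvariant (Δ : H →ₐ[R] H ⊗[R] H) (ψ : Module.Dual R H) : Prop :=
  ∀ a, leftSlice ψ (Δ a) = ψ a • 1

/-- The map `(x ⊗ x') ⊗ (y ⊗ y') ↦ φ(x'y') x ⊗ y`. Its value at `Δ(a) ⊗ Δ(b)` is the translation of
`(id ⊗ φ)(Δ(a)(1 ⊗ b))`, see `IsLeftInvariant.translation_rightSlice`. -/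
def contractSecondLegs (φ : Module.Dual R H) :
    (H ⊗[R] H) ⊗[R] (H ⊗[R] H) →ₗ[R] H ⊗[R] Hᵐᵒᵖ :=
  (MulOpposite.opLinearEquiv R).toLinearMap.lTensor H ∘ₗ rightSlice (φ ∘ₗ LinearMap.mul' R H) ∘ₗ
    (TensorProduct.tensorTensorTensorComm R H H H H).toLinearMap

@[simp]
theorem contractSecondLegs_tmul (φ : Module.Dual R H) (x x' y y' : H) :
    contractSecondLegs φ ((x ⊗ₜ[R] x') ⊗ₜ[R] (y ⊗ₜ[R] y')) =
      φ (x' * y') • (x ⊗ₜ[R] MulOpposite.op y) := by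
  simp [contractSecondLegs]

theorem mulLeftRight_contractSecondLegs (φ : Module.Dual R H) (u v : H ⊗[R] H) :
    AlgHom.mulLeftRight R H (contractSecondLegs φ (u ⊗ₜ v)) 1 = rightSlice φ (u * v) := by
  induction u with
  | zero => simp
  | add u u' hu hu' => simp [TensorProduct.add_tmul, add_mul, hu, hu']
  | tmul x x' =>
    induction v with
    | zero => simp
    | add v v' hv hv' => simp [TensorProduct.tmul_add, mul_add, hv, hv']
    | tmul y y' => simp

theorem leftSlice_contractSecondLegs (φ ε : Module.Dual R H) (u v : H ⊗[R] H) :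
    leftSlice ε (contractSecondLegs φ (u ⊗ₜ v)) =
      MulOpposite.op (rightSlice φ ((1 ⊗ₜ leftSlice ε u) * v)) := by
  induction u with
  | zero => simp
  | add u u' hu hu' => simp [TensorProduct.add_tmul, TensorProduct.tmul_add, add_mul, hu, hu']
  | tmul x x' =>
    induction v with
    | zero => simp
    | add v v' hv hv' => simp [TensorProduct.tmul_add, mul_add, hv, hv']
    | tmul y y' => simp [smul_smul, mul_comm]

theorem lTensor_rightSlice_assoc (φ : Module.Dual R H) (z : H ⊗[R] H) (x' y y' : H) :
    (rightSlice φ).lTensor H (TensorProduct.assoc R H H H (z ⊗ₜ x') * (1 ⊗ₜ (y ⊗ₜ y'))) =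
      φ (x' * y') • (z * (1 ⊗ₜ y)) := by
  induction z with
  | zero => simp
  | tmul p q => simp
  | add z z' hz hz' => simp [TensorProduct.add_tmul, add_mul, hz, hz']

theorem galoisMap_contractSecondLegs_tmul (Δ : H →ₐ[R] H ⊗[R] H) (φ : Module.Dual R H)
    (u v : H ⊗[R] H) :
    galoisMap Δ (contractSecondLegs φ (u ⊗ₜ v)) =
      (rightSlice φ).lTensor H
        (TensorProduct.assoc R H H H (Δ.toLinearMap.rTensor H u) * (1 ⊗ₜ v)) := by
  induction u with
  | zero => simp
  | add u u' hu hu' => simp [TensorProduct.add_tmul, add_mul, hu, hu']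
  | tmul x x' =>
    induction v with
    | zero => simp
    | add v v' hv hv' => simp [TensorProduct.tmul_add, mul_add, hv, hv']
    | tmul y y' => simp [lTensor_rightSlice_assoc]

variable {Δ : H →ₐ[R] H ⊗[R] H} {φ : Module.Dual R H}

theorem IsLeftInvariant.lTensor_rightSlice_lTensor_mul (hφ : IsLeftInvariant Δ φ) (u : H ⊗[R] H)
    (b : H) :
    (rightSlice φ).lTensor H (Δ.toLinearMap.lTensor H u * (1 ⊗ₜ Δ b)) =
      rightSlice φ (u * (1 ⊗ₜ b)) ⊗ₜ 1 := by
  induction u with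
  | zero => simp
  | add u u' hu hu' => simp [TensorProduct.add_tmul, add_mul, hu, hu']
  | tmul x x' => simp [← map_mul, hφ (x' * b), TensorProduct.smul_tmul]

theorem IsLeftInvariant.galoisMap_contractSecondLegs (hφ : IsLeftInvariant Δ φ)
    (hΔ : IsCoassociative Δ) (a b : H) :
    galoisMap Δ (contractSecondLegs φ (Δ a ⊗ₜ Δ b)) = rightSlice φ (Δ a * (1 ⊗ₜ b)) ⊗ₜ 1 := by
  rw [galoisMap_contractSecondLegs_tmul, hΔ, hφ.lTensor_rightSlice_lTensor_mul]

theorem IsLeftInvariant.galoisMap_surjective (hφ : IsLeftInvariant Δ φ) (hΔ : IsCoassociative Δ)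
    (hspan : Submodule.span R {c | ∃ a b, c = rightSlice φ (Δ a * (1 ⊗ₜ b))} = ⊤) :
    Function.Surjective (galoisMap Δ) := by
  have exists_eq_tmul_one (c : H) : ∃ w, galoisMap Δ w = c ⊗ₜ 1 := by
    have h : ⊤ ≤ (LinearMap.range (galoisMap Δ)).comap ((TensorProduct.mk R H H).flip 1) := by
      rw [← hspan, Submodule.span_le]
      rintro _ ⟨a, b, rfl⟩
      exact ⟨_, hφ.galoisMap_contractSecondLegs hΔ a b⟩
    exact h (Submodule.mem_top (x := c))
  intro z
  induction z with
  | zero => exact ⟨0, map_zero _⟩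
  | tmul c d =>
    obtain ⟨w, hw⟩ := exists_eq_tmul_one c
    exact ⟨(1 ⊗ₜ MulOpposite.op d) * w, by simp [galoisMap_one_tmul_mul, hw]⟩
  | add u v hu hv =>
    obtain ⟨u', rfl⟩ := hu
    obtain ⟨v', rfl⟩ := hv
    exact ⟨u' + v', map_add ..⟩

theorem IsLeftInvariant.translation_rightSlice (hφ : IsLeftInvariant Δ φ) (hΔ : IsCoassociative Δ)
    (hT : Function.Bijective (galoisMap Δ)) (a b : H) :
    translation hT (rightSlice φ (Δ a * (1 ⊗ₜ b))) = contractSecondLegs φ (Δ a ⊗ₜ Δ b) :=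
  translation_eq_of_galoisMap_eq hT (hφ.galoisMap_contractSecondLegs hΔ a b)

theorem IsLeftInvariant.exists_counit (hφ : IsLeftInvariant Δ φ) (hΔ : IsCoassociative Δ)
    (hinj : Function.Injective (algebraMap R H)) (hT : Function.Bijective (galoisMap Δ))
    (hspan : Submodule.span R {c | ∃ a b, c = rightSlice φ (Δ a * (1 ⊗ₜ b))} = ⊤) :
    ∃ ε : H →ₐ[R] R, ∀ c, AlgHom.mulLeftRight R H (translation hT c) 1 = ε c • 1 := by
  refine exists_algHom_mulLeftRight_translation_eq_smul_one hT hinj fun c ↦ ?_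
  have h : ⊤ ≤ (Subalgebra.toSubmodule ⊥).comap
      ((AlgHom.mulLeftRight R H).toLinearMap.flip 1 ∘ₗ (translation hT).toLinearMap) := by
    rw [← hspan, Submodule.span_le]
    rintro _ ⟨a, b, rfl⟩
    refine Algebra.mem_bot.mpr ⟨φ (a * b), ?_⟩
    simp [hφ.translation_rightSlice hΔ, mulLeftRight_contractSecondLegs, ← map_mul, hφ (a * b),
      Algebra.algebraMap_eq_smul_one]
  exact h (Submodule.mem_top (x := c))

theorem IsLeftInvariant.antipodeHom_rightSlice (hφ : IsLeftInvariant Δ φ) (hΔ : IsCoassociative Δ)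
    (hT : Function.Bijective (galoisMap Δ)) {ε : H →ₐ[R] R}
    (hε : ∀ c, AlgHom.mulLeftRight R H (translation hT c) 1 = ε c • 1) (a b : H) :
    antipodeHom hT ε (rightSlice φ (Δ a * (1 ⊗ₜ b))) =
      MulOpposite.op (rightSlice φ ((1 ⊗ₜ a) * Δ b)) := by
  rw [antipodeHom_apply, hφ.translation_rightSlice hΔ, leftSlice_contractSecondLegs,
    leftSlice_comul hT hε]

end Integrals

theorem IsRightInvariant.galoisMap_injective {R H : Type*} [CommRing R] [Ring H] [Algebra R H]
    [Module.Free R H] {Δ : H →ₐ[R] H ⊗[R] H} {ψ : Module.Dual R H} (hψ : IsRightInvariant Δ ψ)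
    (hψf : ((LinearMap.mul R H).compr₂ ψ).SeparatingRight) : Function.Injective (galoisMap Δ) := by
  have leftSlice_mul_galoisMap (c : H) (w : H ⊗[R] Hᵐᵒᵖ) :
      MulOpposite.op (leftSlice ψ (Δ c * galoisMap Δ w)) =
        leftSlice (ψ ∘ₗ LinearMap.mulLeft R c) w := by
    induction w with
    | zero => simp
    | tmul x y => simp [← mul_assoc, ← map_mul, leftSlice_mul_one_tmul, hψ (c * x)]
    | add u v hu hv => simp [mul_add, hu, hv]
  refine (injective_iff_map_eq_zero _).mpr fun w hw ↦ ?_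
  refine eq_zero_of_forall_rightSlice_eq_zero fun ω ↦ hψf _ fun c ↦ ?_
  have h := apply_rightSlice (ψ ∘ₗ LinearMap.mulLeft R c) ω w
  rw [← leftSlice_mul_galoisMap, hw] at h
  simpa using h

theorem antipode_exists_unique_antihomomorphism_general {k H : Type*} [Field k] [Ring H]
    [Algebra k H] (Δ : H →ₐ[k] H ⊗[k] H) (hΔ : IsCoassociative Δ)
    (hleg : Submodule.span k {c | ∃ a, ∃ ω : Module.Dual k H, c = rightSlice ω (Δ a)} = ⊤)
    (φ : Module.Dual k H) (hφ : IsLeftInvariant Δ φ)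
    (hφf : ((LinearMap.mul k H).compr₂ φ).SeparatingLeft)
    (ψ : Module.Dual k H) (hψ : IsRightInvariant Δ ψ)
    (hψf : ((LinearMap.mul k H).compr₂ ψ).SeparatingRight) :
    ∃ S : H →ₗ[k] H,
      (∀ a b, S (rightSlice φ (Δ a * (1 ⊗ₜ b))) = rightSlice φ ((1 ⊗ₜ a) * Δ b)) ∧
      (∀ S' : H →ₗ[k] H,
        (∀ a b, S' (rightSlice φ (Δ a * (1 ⊗ₜ b))) = rightSlice φ ((1 ⊗ₜ a) * Δ b)) → S' = S) ∧
      (∀ a b, S (a * b) = S b * S a) := by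
  cases subsingleton_or_nontrivial H
  · exact ⟨0, fun _ _ ↦ Subsingleton.elim .., fun _ _ ↦ Subsingleton.elim ..,
      fun _ _ ↦ Subsingleton.elim ..⟩
  have hspan := span_rightSlice_mul_one_tmul_eq_top hφf hleg
  have hT : Function.Bijective (galoisMap Δ) :=
    ⟨hψ.galoisMap_injective hψf, hφ.galoisMap_surjective hΔ hspan⟩
  obtain ⟨ε, hε⟩ := hφ.exists_counit hΔ (algebraMap k H).injective hT hspan
  let S : H →ₗ[k] H :=
    (MulOpposite.opLinearEquiv k).symm.toLinearMap ∘ₗ (antipodeHom hT ε).toLinearMap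
  have hS (a b : H) : S (rightSlice φ (Δ a * (1 ⊗ₜ b))) = rightSlice φ ((1 ⊗ₜ a) * Δ b) :=
    congrArg MulOpposite.unop (hφ.antipodeHom_rightSlice hΔ hT hε a b)
  refine ⟨S, hS, fun S' hS' ↦ LinearMap.ext_on hspan ?_, fun a b ↦ by simp [S]⟩
  rintro _ ⟨a, b, rfl⟩
  rw [hS', hS]

/-- There is a unique linear map `S : A → A` with
`S((id ⊗ φ)(Δ(a)(1 ⊗ b))) = (id ⊗ φ)((1 ⊗ a)Δ(b))`, and it is anti-multiplicative. -/
theorem antipode_exists_unique_antihomomorphism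
    (Δ : A →ₐ[ℂ] A ⊗[ℂ] A) (hΔ : IsCoassoc Δ) (hfull : IsFull Δ)
    (φ : A →ₗ[ℂ] ℂ) (hφ : IsLeftIntegral Δ φ) (hφf : IsFaithful φ)
    (ψ : A →ₗ[ℂ] ℂ) (hψ : IsRightIntegral Δ ψ) (hψf : IsFaithful ψ) :
    ∃ S : A →ₗ[ℂ] A,
      (∀ a b : A, S (sliceR φ (Δ a * ((1 : A) ⊗ₜ[ℂ] b))) =
        sliceR φ (((1 : A) ⊗ₜ[ℂ] a) * Δ b)) ∧
      (∀ S' : A →ₗ[ℂ] A,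
        (∀ a b : A, S' (sliceR φ (Δ a * ((1 : A) ⊗ₜ[ℂ] b))) =
          sliceR φ (((1 : A) ⊗ₜ[ℂ] a) * Δ b)) → S' = S) ∧
      (∀ a b : A, S (a * b) = S b * S a) :=
  antipode_exists_unique_antihomomorphism_general Δ hΔ hfull.1 φ hφ.2 hφf.2 ψ hψ.2 hψf.1
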